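/- For every natural number N there exists a finite connected simple graph G with |V(G)| ≥ N such that G has a valid orientation D₁ with γ_t(D₁) = 3 and a valid orientation D₂ with γ_t(D₂) = |V(G)| − 1. In particular, there are arbitrarily large graphs G with dom_t(G) = 3 and DOM_t(G) = |V(G)| − 1. -/

import Mathlib

/-- A set `S` is a total dominating set of the digraph `D` (given as its arc
relation) if every vertex has an in-neighbor belonging to `S`. -/
def TotalDomSet {V : Type} (D : V → V → Prop) (S : Set V) : Prop :=
  ∀ v : V, ∃ u ∈ S, D u v

/-- The total domination number of a digraph: the least cardinality of a total
dominating set. -/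
noncomputable def totalDomNum {V : Type} (D : V → V → Prop) : ℕ :=
  sInf {n | ∃ S : Set V, TotalDomSet D S ∧ S.ncard = n}

/-- `D` is an orientation of the simple graph `G`: every arc of `D` lies on an
edge of `G`, and every edge of `G` carries exactly one of the two possible arcs. -/
def IsOrientation {V : Type} (G : SimpleGraph V) (D : V → V → Prop) : Prop :=
  (∀ u v : V, D u v → G.Adj u v) ∧ ∀ u v : V, G.Adj u v → (D u v ↔ ¬ D v u)

/-- An orientation (digraph) is valid if every vertex has at least one in-neighbor. -/
def IsValidOrientation {V : Type} (D : V → V → Prop) : Prop :=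
  ∀ v : V, ∃ u : V, D u v

/-- The upper orientable total domination number of `G`. -/
noncomputable def DOMt {V : Type} [Fintype V] (G : SimpleGraph V) : ℕ :=
  sSup {n | ∃ D : V → V → Prop, IsOrientation G D ∧ IsValidOrientation D ∧ totalDomNum D = n}

/-- The lower orientable total domination number of `G`. -/
noncomputable def domt {V : Type} [Fintype V] (G : SimpleGraph V) : ℕ :=
  sInf {n | ∃ D : V → V → Prop, IsOrientation G D ∧ IsValidOrientation D ∧ totalDomNum D = n}

theorem TotalDomSet.totalDomNum_le {V : Type} {D : V → V → Prop} {S : Set V}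
    (hS : TotalDomSet D S) : totalDomNum D ≤ S.ncard :=
  Nat.sInf_le ⟨S, hS, rfl⟩

theorem IsValidOrientation.totalDomSet_univ {V : Type} {D : V → V → Prop}
    (hD : IsValidOrientation D) : TotalDomSet D Set.univ := fun v => by
  simpa using hD v

theorem IsValidOrientation.le_totalDomNum {V : Type} {D : V → V → Prop}
    (hD : IsValidOrientation D) {k : ℕ} (h : ∀ S, TotalDomSet D S → k ≤ S.ncard) :
    k ≤ totalDomNum D := by
  refine le_csInf ⟨_, _, hD.totalDomSet_univ, rfl⟩ ?_
  rintro _ ⟨S, hS, rfl⟩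
  exact h S hS

theorem IsOrientation.asymm {V : Type} {G : SimpleGraph V} {D : V → V → Prop}
    (hG : IsOrientation G D) {u v : V} (h : D u v) : ¬ D v u :=
  (hG.2 u v (hG.1 u v h)).1 h

/-- Following in-neighbors backwards inside a total dominating set visits three distinct vertices. -/
theorem IsOrientation.three_le_totalDomNum {V : Type} [Finite V] [Nonempty V]
    {G : SimpleGraph V} {D : V → V → Prop} (hG : IsOrientation G D)
    (hD : IsValidOrientation D) : 3 ≤ totalDomNum D := by
  refine hD.le_totalDomNum fun S hS => ?_
  obtain ⟨a, ha, -⟩ := hS (Classical.arbitrary V)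
  obtain ⟨b, hb, hba⟩ := hS a
  obtain ⟨c, hc, hcb⟩ := hS b
  have hne : b ≠ a := (hG.1 _ _ hba).ne
  have hne' : c ≠ b := (hG.1 _ _ hcb).ne
  have hca : c ≠ a := by
    rintro rfl
    exact hG.asymm hba hcb
  exact (Set.two_lt_ncard_iff (Set.toFinite S)).2 ⟨a, b, c, ha, hb, hc, hne.symm, hca.symm, hne'.symm⟩

/-- If no proper subset is totally dominating, then every vertex has a unique in-neighbor. -/
theorem IsValidOrientation.eq_of_arc_of_arc {V : Type} [Finite V] {D : V → V → Prop}
    (hD : IsValidOrientation D) (h : Nat.card V - 1 < totalDomNum D) {a b v : V}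
    (ha : D a v) (hb : D b v) : a = b := by
  have private_out (x : V) : ∃ y, ∀ u, D u y → u = x := by
    by_contra! hx
    have hS : TotalDomSet D ({x}ᶜ : Set V) := fun y => by
      obtain ⟨u, hu, hux⟩ := hx y
      exact ⟨u, hux, hu⟩
    have := hS.totalDomNum_le
    rw [Set.ncard_compl, Set.ncard_singleton] at this
    omega
  choose f hf using private_out
  have hinj : Function.Injective f := fun x y hxy => by
    obtain ⟨u, hu⟩ := hD (f x)
    rw [← hf x u hu, ← hf y u (hxy ▸ hu)]
  obtain ⟨x, rfl⟩ := Finite.surjective_of_injective hinj v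
  rw [hf x a ha, hf x b hb]

/-- The fan: the path `1, 2, …, n - 1` together with the hub `0` joined to all its vertices. -/
def fanGraph (n : ℕ) : SimpleGraph (Fin n) where
  Adj u v := u ≠ v ∧ (u.val = 0 ∨ v.val = 0 ∨ u.val + 1 = v.val ∨ v.val + 1 = u.val)
  symm := ⟨fun u v h => by grind⟩
  loopless := ⟨fun u h => h.1 rfl⟩

/-- The orientation of the fan in which the hub dominates all path vertices but `2`. -/
def fanHubOut (n : ℕ) (u v : Fin n) : Prop :=
  (u.val = 0 ∧ v.val ≠ 0 ∧ v.val ≠ 2) ∨ (u.val = 2 ∧ v.val = 0) ∨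
    (u.val ≠ 0 ∧ u.val + 1 = v.val)

/-- The orientation of the fan along `0, 1, …, n - 1` with all other arcs pointing to the hub. -/
def fanHubIn (n : ℕ) (u v : Fin n) : Prop :=
  u.val + 1 = v.val ∨ (2 ≤ u.val ∧ v.val = 0)

theorem fanGraph_connected (n : ℕ) : (fanGraph (n + 1)).Connected := by
  rw [SimpleGraph.connected_iff_exists_forall_reachable]
  refine ⟨0, fun v => ?_⟩
  by_cases hv : v = 0
  · rw [hv]
  · exact SimpleGraph.Adj.reachable ⟨Ne.symm hv, Or.inl rfl⟩

theorem isOrientation_fanHubOut (n : ℕ) : IsOrientation (fanGraph n) (fanHubOut n) := by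
  constructor <;> intro u v <;> simp only [fanGraph, fanHubOut, ne_eq, Fin.ext_iff] <;> omega

theorem isOrientation_fanHubIn (n : ℕ) : IsOrientation (fanGraph n) (fanHubIn n) := by
  constructor <;> intro u v <;> simp only [fanGraph, fanHubIn, ne_eq, Fin.ext_iff] <;> omega

theorem totalDomSet_fanHubOut {n : ℕ} (hn : 3 ≤ n) :
    TotalDomSet (fanHubOut n) {⟨0, by omega⟩, ⟨1, by omega⟩, ⟨2, by omega⟩} := by
  intro v
  by_cases h0 : v.val = 0
  · exact ⟨⟨2, by omega⟩, by simp, by simp [fanHubOut, h0]⟩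
  by_cases h2 : v.val = 2
  · exact ⟨⟨1, by omega⟩, by simp, by simp [fanHubOut, h2]⟩
  · exact ⟨⟨0, by omega⟩, by simp, by simp [fanHubOut, h0, h2]⟩

theorem isValidOrientation_fanHubOut {n : ℕ} (hn : 3 ≤ n) :
    IsValidOrientation (fanHubOut n) := fun v => by
  obtain ⟨u, -, hu⟩ := totalDomSet_fanHubOut hn v
  exact ⟨u, hu⟩

theorem isValidOrientation_fanHubIn {n : ℕ} (hn : 3 ≤ n) :
    IsValidOrientation (fanHubIn n) := fun v => by
  by_cases h0 : v.val = 0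
  · exact ⟨⟨2, by omega⟩, by simp [fanHubIn, h0]⟩
  · exact ⟨⟨v.val - 1, by omega⟩, by simp only [fanHubIn]; omega⟩

theorem totalDomNum_fanHubOut {n : ℕ} (hn : 3 ≤ n) : totalDomNum (fanHubOut n) = 3 := by
  have : Nonempty (Fin n) := ⟨⟨0, by omega⟩⟩
  apply le_antisymm
  · refine (totalDomSet_fanHubOut hn).totalDomNum_le.trans (le_of_eq ?_)
    rw [Set.ncard_eq_three]
    exact ⟨_, _, _, by simp, by simp, by simp, rfl⟩
  · exact (isOrientation_fanHubOut n).three_le_totalDomNum (isValidOrientation_fanHubOut hn)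

theorem le_totalDomNum_fanHubIn {n : ℕ} (hn : 3 ≤ n) : n - 1 ≤ totalDomNum (fanHubIn n) := by
  refine (isValidOrientation_fanHubIn hn).le_totalDomNum fun S hS => ?_
  have hsub : ({⟨n - 1, by omega⟩}ᶜ : Set (Fin n)) ⊆ S := by
    intro u hu
    have hu' : u.val ≠ n - 1 := fun h => hu (Fin.ext h)
    obtain ⟨w, hwS, hw⟩ := hS ⟨u.val + 1, by omega⟩
    have : w = u := by
      simp only [fanHubIn] at hw
      ext
      omega
    exact this ▸ hwS
  have := Set.ncard_le_ncard hsub (Set.toFinite S)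
  rwa [Set.ncard_compl, Set.ncard_singleton, Nat.card_fin] at this

theorem totalDomNum_le_of_isOrientation_fanGraph {n : ℕ} (hn : 5 ≤ n)
    {D : Fin n → Fin n → Prop} (hG : IsOrientation (fanGraph n) D) (hD : IsValidOrientation D) :
    totalDomNum D ≤ n - 1 := by
  by_contra! hlt
  have huniq {a b v : Fin n} (ha : D a v) (hb : D b v) : a = b :=
    hD.eq_of_arc_of_arc (by rwa [Nat.card_fin]) ha hb
  obtain ⟨j, hj⟩ := hD ⟨0, by omega⟩
  have hub_out (i : Fin n) (hi : i.val ≠ 0) (hij : i ≠ j) : D ⟨0, by omega⟩ i := by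
    exact (hG.2 _ _ ⟨fun h => hi (congrArg Fin.val h).symm, Or.inl rfl⟩).2 fun h => hij (huniq h hj)
  -- A path edge avoiding `j` would give one of its ends two in-neighbors.
  have path_edge (a b : Fin n) (ha : a.val ≠ 0) (hab : a.val + 1 = b.val) (haj : a ≠ j)
      (hbj : b ≠ j) : False := by
    have hb : b.val ≠ 0 := by omega
    have hadj : (fanGraph n).Adj a b :=
      ⟨fun h => by rw [h] at hab; omega, Or.inr (Or.inr (Or.inl hab))⟩
    by_cases h : D a b
    · exact ha (congrArg Fin.val (huniq h (hub_out b hb hbj)))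
    · have h' : D b a := (hG.2 b a hadj.symm).2 h
      exact hb (congrArg Fin.val (huniq h' (hub_out a ha haj)))
  by_cases hj2 : j.val ≤ 2
  · refine path_edge ⟨3, by omega⟩ ⟨4, by omega⟩ (by simp) rfl ?_ ?_ <;>
      · rw [ne_eq, Fin.ext_iff]
        dsimp only
        omega
  · refine path_edge ⟨1, by omega⟩ ⟨2, by omega⟩ (by simp) rfl ?_ ?_ <;>
      · rw [ne_eq, Fin.ext_iff]
        dsimp only
        omega

theorem totalDomNum_fanHubIn {n : ℕ} (hn : 5 ≤ n) : totalDomNum (fanHubIn n) = n - 1 :=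
  le_antisymm
    (totalDomNum_le_of_isOrientation_fanGraph hn (isOrientation_fanHubIn n)
      (isValidOrientation_fanHubIn (by omega)))
    (le_totalDomNum_fanHubIn (by omega))

/-- There are arbitrarily large finite connected simple graphs having a valid
orientation with total domination number 3 and a valid orientation with total
domination number `|V(G)| - 1`; in particular, arbitrarily large graphs with
`dom_t(G) = 3` and `DOM_t(G) = |V(G)| - 1`. -/
theorem stmt_18 :
    ∀ N : ℕ, ∃ (n : ℕ) (G : SimpleGraph (Fin n)),
      N ≤ n ∧ G.Connected ∧
      (∃ D₁ : Fin n → Fin n → Prop, IsOrientation G D₁ ∧ IsValidOrientation D₁ ∧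
        totalDomNum D₁ = 3) ∧
      (∃ D₂ : Fin n → Fin n → Prop, IsOrientation G D₂ ∧ IsValidOrientation D₂ ∧
        totalDomNum D₂ = n - 1) ∧
      domt G = 3 ∧ DOMt G = n - 1 := by
  intro N
  have h₁ : ∃ D, IsOrientation (fanGraph (N + 5)) D ∧ IsValidOrientation D ∧ totalDomNum D = 3 :=
    ⟨_, isOrientation_fanHubOut _, isValidOrientation_fanHubOut (by omega),
      totalDomNum_fanHubOut (by omega)⟩
  have h₂ : ∃ D, IsOrientation (fanGraph (N + 5)) D ∧ IsValidOrientation D ∧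
      totalDomNum D = N + 5 - 1 :=
    ⟨_, isOrientation_fanHubIn _, isValidOrientation_fanHubIn (by omega),
      totalDomNum_fanHubIn (by omega)⟩
  refine ⟨N + 5, fanGraph (N + 5), by omega, fanGraph_connected _, h₁, h₂, ?_, ?_⟩
  · refine IsLeast.csInf_eq ⟨h₁, ?_⟩
    rintro _ ⟨D, hG, hD, rfl⟩
    exact hG.three_le_totalDomNum hD
  · refine IsGreatest.csSup_eq ⟨h₂, ?_⟩
    rintro _ ⟨D, hG, hD, rfl⟩
    exact totalDomNum_le_of_isOrientation_fanGraph (by omega) hG hD
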